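/- The reduced Bergman kernel of the open unit disc 𝔻 is K(z, w) = 1/(π·(1 − z·conj(w))²): for every w ∈ 𝔻 the function z ↦ 1/(π·(1 − z·conj(w))²) belongs to 𝒟(𝔻), and for every u ∈ 𝒟(𝔻) and every w ∈ 𝔻 one has u(w) = ∫_𝔻 u(z)·conj(K(z, w)) dA(z). -/

import Mathlib

/-!
The reproducing formula is computed in polar coordinates. On the circle `|z| = r < 1` one has
`z̄ = r² / z`, so the conjugate of `K(z, w)` equals `z² / (π (z - r² w)²)`, and Cauchy's formula for
the derivative gives the average of `u · conj K(·, w)` over that circle as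
`π⁻¹ v'(r² w)` with `v z = z u z` (`circleAverage_mul_conj_kernel`). Integrating against
`2 π r dr` leaves `∫₀¹ 2 r v'(r² w) dr`, whose integrand is the derivative of `r² u(r² w)`, so the
integral is `u w` (`integral_radial`). The passage to polar coordinates (`integral_unitDisc_eq`)
needs integrability on the whole disc, which holds as `u` and `K(·, w)` are both square integrable.

For the membership statement, `K(·, w)` has the primitive `z / (π (1 - z w̄))`, and it is continuous
on the closed disc, hence square integrable.
-/

open MeasureTheory Complex Metric

noncomputable section

/-- `u` has a holomorphic primitive on `D`. -/
def HasPrimitiveOn (u : ℂ → ℂ) (D : Set ℂ) : Prop :=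
  ∃ g : ℂ → ℂ, DifferentiableOn ℂ g D ∧ ∀ z ∈ D, HasDerivAt g (u z) z

/-- `u` belongs to the reduced Bergman space of `D`. -/
def MemReducedBergman (D : Set ℂ) (u : ℂ → ℂ) : Prop :=
  DifferentiableOn ℂ u D ∧ HasPrimitiveOn u D ∧
    IntegrableOn (fun z => ‖u z‖ ^ 2) D volume

/-- Integrability of a function on `ℂ` transfers to polar coordinates, with the Jacobian weight. -/
lemma integrableOn_polarCoord_target {F : ℂ → ℂ} (hF : Integrable F) :
    IntegrableOn (fun p : ℝ × ℝ => p.1 • F (Complex.polarCoord.symm p)) polarCoord.target := by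
  have h1 : Integrable (F ∘ measurableEquivRealProd.symm) :=
    (volume_preserving_equiv_real_prod.symm).integrable_comp_emb
      measurableEquivRealProd.symm.measurableEmbedding |>.2 hF
  have h2 := (integrableOn_image_iff_integrableOn_abs_det_fderiv_smul volume
    polarCoord.open_target.measurableSet
    (fun p _ => (hasFDerivAt_polarCoord_symm p).hasFDerivWithinAt)
    polarCoord.symm.injOn (F ∘ measurableEquivRealProd.symm)).1 h1.integrableOn
  refine h2.congr_fun (fun p hp => ?_) polarCoord.open_target.measurableSet
  have hp1 : 0 < p.1 := hp.1
  simp only [det_fderivPolarCoordSymm, abs_of_pos hp1, Function.comp_apply,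
    measurableEquivRealProd_symm_polarCoord_symm_apply]

lemma integral_circle_eq (F : ℂ → ℂ) (r : ℝ) :
    ∫ θ in Set.Ioo (-Real.pi) Real.pi, F (Complex.polarCoord.symm (r, θ)) =
      (2 * Real.pi) • Real.circleAverage F 0 r := by
  have hper : Function.Periodic (fun θ : ℝ => F (circleMap 0 r θ)) (2 * Real.pi) :=
    (periodic_circleMap 0 r).comp F
  have h := hper.intervalIntegral_add_eq 0 (-Real.pi)
  rw [Real.circleAverage_def, smul_inv_smul₀ (by positivity)]
  rw [zero_add] at h
  rw [h, show -Real.pi + 2 * Real.pi = Real.pi by ring,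
    intervalIntegral.integral_of_le (by linarith [Real.pi_pos]), integral_Ioc_eq_integral_Ioo]
  congr 1
  ext θ
  rw [Complex.polarCoord_symm_apply, circleMap_zero, Complex.exp_mul_I]
  simp

/-- Integration over the unit disc, one circle at a time. -/
lemma integral_unitDisc_eq {f : ℂ → ℂ} (hf : IntegrableOn f (ball 0 1)) :
    ∫ z in ball (0 : ℂ) 1, f z =
      ∫ r in (0 : ℝ)..1, (2 * Real.pi * r) • Real.circleAverage f 0 r := by
  set F : ℂ → ℂ := (ball (0 : ℂ) 1).indicator f with hF
  have hFi : Integrable F := (integrable_indicator_iff measurableSet_ball).2 hf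
  rw [← integral_indicator measurableSet_ball, ← hF, ← Complex.integral_comp_polarCoord_symm F]
  have hpt := integrableOn_polarCoord_target hFi
  rw [polarCoord_target] at hpt ⊢
  rw [Measure.volume_eq_prod] at hpt ⊢
  rw [setIntegral_prod _ hpt]
  simp only [integral_smul, integral_circle_eq]
  rw [intervalIntegral.integral_of_le zero_le_one, integral_Ioc_eq_integral_Ioo]
  rw [setIntegral_eq_of_subset_of_forall_sdiff_eq_zero measurableSet_Ioi
    (fun x hx => hx.1 : Set.Ioo (0 : ℝ) 1 ⊆ Set.Ioi 0)]
  · refine setIntegral_congr_fun measurableSet_Ioo (fun r hr => ?_)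
    have : Real.circleAverage F 0 r = Real.circleAverage f 0 r := by
      refine Real.circleAverage_congr_sphere (fun z hz => ?_)
      rw [mem_sphere_zero_iff_norm, abs_of_pos hr.1] at hz
      exact Set.indicator_of_mem (by simpa [hz] using hr.2) f
    simp only [this, smul_smul]
    congr 1
    ring
  · intro r hr
    have hr0 : 0 < r := hr.1
    have hr1 : 1 ≤ r := by
      by_contra! h
      exact hr.2 ⟨hr0, h⟩
    have : Real.circleAverage F 0 r = 0 := by
      rw [Real.circleAverage_congr_sphere (f₂ := fun _ => (0 : ℂ)), Real.circleAverage_const]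
      intro z hz
      rw [mem_sphere_zero_iff_norm, abs_of_pos hr0] at hz
      exact Set.indicator_of_notMem (by simpa [hz] using hr1) f
    simp [this]

lemma one_sub_mul_conj_ne_zero {z w : ℂ} (hz : ‖z‖ ≤ 1) (hw : ‖w‖ < 1) :
    1 - z * (starRingEnd ℂ) w ≠ 0 := by
  intro h
  have h1 : ‖z * (starRingEnd ℂ) w‖ = 1 := by rw [← sub_eq_zero.1 h, norm_one]
  rw [norm_mul, RCLike.norm_conj] at h1
  nlinarith [norm_nonneg z, norm_nonneg w]

lemma continuousOn_kernel {w : ℂ} (hw : ‖w‖ < 1) :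
    ContinuousOn (fun z => 1 / ((Real.pi : ℂ) * (1 - z * (starRingEnd ℂ) w) ^ 2))
      (closedBall (0 : ℂ) 1) := by
  refine ContinuousOn.div (by fun_prop) (by fun_prop) (fun z hz => ?_)
  exact mul_ne_zero (by exact_mod_cast Real.pi_ne_zero)
    (pow_ne_zero _ (one_sub_mul_conj_ne_zero (by simpa using hz) hw))

lemma hasDerivAt_kernel_primitive {z w : ℂ} (hz : ‖z‖ ≤ 1) (hw : ‖w‖ < 1) :
    HasDerivAt (fun z => z / ((Real.pi : ℂ) * (1 - z * (starRingEnd ℂ) w)))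
      (1 / ((Real.pi : ℂ) * (1 - z * (starRingEnd ℂ) w) ^ 2)) z := by
  have hne := one_sub_mul_conj_ne_zero hz hw
  have hpi : (Real.pi : ℂ) ≠ 0 := by exact_mod_cast Real.pi_ne_zero
  have h1 : HasDerivAt (fun z => (Real.pi : ℂ) * (1 - z * (starRingEnd ℂ) w))
      ((Real.pi : ℂ) * (-(1 * (starRingEnd ℂ) w))) z :=
    (((hasDerivAt_id z).mul_const _).const_sub 1).const_mul _
  refine ((hasDerivAt_id z).div h1 (mul_ne_zero hpi hne)).congr_deriv ?_
  simp only [id]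
  field_simp
  ring

lemma kernel_mem {w : ℂ} (hw : ‖w‖ < 1) :
    MemReducedBergman (ball (0 : ℂ) 1)
      (fun z => 1 / ((Real.pi : ℂ) * (1 - z * (starRingEnd ℂ) w) ^ 2)) := by
  have hb : ∀ z ∈ ball (0 : ℂ) 1, ‖z‖ ≤ 1 := fun z hz => (mem_ball_zero_iff.1 hz).le
  refine ⟨?_, ⟨_, fun z hz => (hasDerivAt_kernel_primitive (hb z hz)
    hw).differentiableAt.differentiableWithinAt,
    fun z hz => hasDerivAt_kernel_primitive (hb z hz) hw⟩, ?_⟩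
  · refine DifferentiableOn.div (by fun_prop) (by fun_prop) (fun z hz => ?_)
    exact mul_ne_zero (by exact_mod_cast Real.pi_ne_zero)
      (pow_ne_zero _ (one_sub_mul_conj_ne_zero (hb z hz) hw))
  · exact (((continuousOn_kernel hw).norm.pow 2).integrableOn_compact
      (isCompact_closedBall 0 1)).mono_set ball_subset_closedBall

lemma integrableOn_mul_conj_kernel {u : ℂ → ℂ} (hu : DifferentiableOn ℂ u (ball 0 1))
    (hi : IntegrableOn (fun z => ‖u z‖ ^ 2) (ball (0 : ℂ) 1)) {w : ℂ} (hw : ‖w‖ < 1) :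
    IntegrableOn (fun z => u z *
      (starRingEnd ℂ) (1 / ((Real.pi : ℂ) * (1 - z * (starRingEnd ℂ) w) ^ 2))) (ball 0 1) := by
  have hm : AEStronglyMeasurable u (volume.restrict (ball (0 : ℂ) 1)) :=
    hu.continuousOn.aestronglyMeasurable measurableSet_ball
  have hkc : ContinuousOn (fun z => (starRingEnd ℂ)
      (1 / ((Real.pi : ℂ) * (1 - z * (starRingEnd ℂ) w) ^ 2))) (closedBall (0 : ℂ) 1) :=
    Complex.continuous_conj.comp_continuousOn (continuousOn_kernel hw)
  have hk : MemLp (fun z => (starRingEnd ℂ)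
      (1 / ((Real.pi : ℂ) * (1 - z * (starRingEnd ℂ) w) ^ 2))) 2
      (volume.restrict (ball (0 : ℂ) 1)) := by
    refine (memLp_two_iff_integrable_sq_norm ((hkc.mono
      ball_subset_closedBall).aestronglyMeasurable measurableSet_ball)).2 ?_
    exact ((hkc.norm.pow 2).integrableOn_compact
      (isCompact_closedBall 0 1)).mono_set ball_subset_closedBall
  exact ((memLp_two_iff_integrable_sq_norm hm).2 hi).integrable_mul hk

/-- On the circle `|z| = r` one has `z̄ = r² / z`, so the conjugated kernel becomes
`z² / (π (z - r² w)²)`, and Cauchy's formula for the derivative evaluates the average. -/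
lemma circleAverage_mul_conj_kernel {u : ℂ → ℂ} (hu : DifferentiableOn ℂ u (ball 0 1))
    {w : ℂ} (hw : ‖w‖ < 1) {r : ℝ} (hr : r ∈ Set.Ioo (0 : ℝ) 1) :
    Real.circleAverage (fun z => u z *
      (starRingEnd ℂ) (1 / ((Real.pi : ℂ) * (1 - z * (starRingEnd ℂ) w) ^ 2))) 0 r =
      (Real.pi : ℂ)⁻¹ * deriv (fun z => z * u z) ((r : ℂ) ^ 2 * w) := by
  have hmem : (r : ℂ) ^ 2 * w ∈ ball (0 : ℂ) r := by
    rw [mem_ball_zero_iff, norm_mul, norm_pow, Complex.norm_real, Real.norm_of_nonneg hr.1.le]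
    nlinarith [hr.1, hr.2, norm_nonneg w, mul_pos hr.1 hr.1]
  have hsub : closedBall (0 : ℂ) r ⊆ ball 0 1 := closedBall_subset_ball hr.2
  have hv : DifferentiableOn ℂ (fun z => z * u z) (ball 0 1) := differentiableOn_id.mul hu
  rw [← two_pi_I_inv_smul_circleIntegral_sub_sq_inv_smul_of_differentiable isOpen_ball hsub
    hv hmem, Real.circleAverage_eq_circleIntegral hr.1.ne']
  have hI : (∮ z in C(0, r), (z - 0)⁻¹ • (u z *
      (starRingEnd ℂ) (1 / ((Real.pi : ℂ) * (1 - z * (starRingEnd ℂ) w) ^ 2)))) =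
      ∮ z in C(0, r), (Real.pi : ℂ)⁻¹ •
        (((z - (r : ℂ) ^ 2 * w) ^ 2)⁻¹ • (z * u z)) := by
    refine circleIntegral.integral_congr hr.1.le (fun z hz => ?_)
    have hzr : ‖z‖ = r := by simpa using hz
    have hz0 : z ≠ 0 := by
      rw [← norm_pos_iff, hzr]
      exact hr.1
    have hzz : z * (starRingEnd ℂ) z = (r : ℂ) ^ 2 := by
      rw [Complex.mul_conj, Complex.normSq_eq_norm_sq, hzr]
      push_cast
      rfl
    have key : z - (r : ℂ) ^ 2 * w = z * (1 - (starRingEnd ℂ) z * w) := by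
      rw [← hzz]
      ring
    have hne : 1 - (starRingEnd ℂ) z * w ≠ 0 := by
      have := one_sub_mul_conj_ne_zero (z := z) (w := w) (hzr.trans_le hr.2.le) hw
      intro h
      apply this
      have h' := congrArg (starRingEnd ℂ) h
      simpa using h'
    have hpi : (Real.pi : ℂ) ≠ 0 := by exact_mod_cast Real.pi_ne_zero
    simp only [key, sub_zero, smul_eq_mul, map_div₀, map_one, map_mul, map_pow,
      map_sub, Complex.conj_conj, Complex.conj_ofReal]
    field_simp
  rw [hI, circleIntegral.integral_smul, smul_comm, smul_eq_mul (a := (Real.pi : ℂ)⁻¹)]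

/-- The radial integrand is the derivative of `r ↦ r² u(r² w)`. -/
lemma integral_radial {u : ℂ → ℂ} (hu : DifferentiableOn ℂ u (ball 0 1)) {w : ℂ}
    (hw : ‖w‖ < 1) :
    ∫ r in (0 : ℝ)..1, 2 * (r : ℂ) * deriv (fun z => z * u z) ((r : ℂ) ^ 2 * w) = u w := by
  have hmem : ∀ r ∈ Set.uIcc (0 : ℝ) 1, (r : ℂ) ^ 2 * w ∈ ball (0 : ℂ) 1 := by
    intro r hr
    rw [Set.uIcc_of_le zero_le_one] at hr
    rw [mem_ball_zero_iff, norm_mul, norm_pow, Complex.norm_real, Real.norm_of_nonneg hr.1]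
    have : r ^ 2 ≤ 1 := pow_le_one₀ hr.1 hr.2
    nlinarith [norm_nonneg w]
  have hv : DifferentiableOn ℂ (fun z => z * u z) (ball 0 1) := differentiableOn_id.mul hu
  have hsq : ∀ r : ℝ, HasDerivAt (fun r : ℝ => (r : ℂ) ^ 2) (2 * (r : ℂ)) r := by
    intro r
    exact ((hasDerivAt_id r).ofReal_comp.pow 2).congr_deriv (by simp)
  have hG : ∀ r ∈ Set.uIcc (0 : ℝ) 1, HasDerivAt (fun r : ℝ => (r : ℂ) ^ 2 * u ((r : ℂ) ^ 2 * w))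
      (2 * (r : ℂ) * deriv (fun z => z * u z) ((r : ℂ) ^ 2 * w)) r := by
    intro r hr
    have hud : HasDerivAt u (deriv u ((r : ℂ) ^ 2 * w)) ((r : ℂ) ^ 2 * w) :=
      (hu.differentiableAt (isOpen_ball.mem_nhds (hmem r hr))).hasDerivAt
    have hd : deriv (fun z => z * u z) ((r : ℂ) ^ 2 * w) =
        1 * u ((r : ℂ) ^ 2 * w) + (r : ℂ) ^ 2 * w * deriv u ((r : ℂ) ^ 2 * w) :=
      ((hasDerivAt_id _).mul hud).deriv
    have hc : HasDerivAt (fun r : ℝ => u ((r : ℂ) ^ 2 * w))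
        (deriv u ((r : ℂ) ^ 2 * w) * (2 * (r : ℂ) * w)) r :=
      HasDerivAt.comp (h₂ := u) (h := fun r : ℝ => (r : ℂ) ^ 2 * w) r hud ((hsq r).mul_const w)
    refine ((hsq r).mul hc).congr_deriv ?_
    rw [hd]
    ring
  rw [intervalIntegral.integral_eq_sub_of_hasDerivAt hG]
  · simp
  · refine ContinuousOn.intervalIntegrable ?_
    refine ContinuousOn.mul (by fun_prop) ?_
    exact (hv.deriv isOpen_ball).continuousOn.comp (by fun_prop) hmem

/-- The reduced Bergman kernel of the unit disc is `K(z,w) = 1/(π (1 - z w̄)²)`: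
for each `w ∈ 𝔻` the function `K(·,w)` lies in the reduced Bergman space of `𝔻`, and
it reproduces every element of the reduced Bergman space. -/
theorem reducedBergmanKernel_unitDisc :
    (∀ w ∈ ball (0 : ℂ) 1,
      MemReducedBergman (ball (0 : ℂ) 1)
        (fun z => 1 / ((Real.pi : ℂ) * (1 - z * (starRingEnd ℂ) w) ^ 2))) ∧
    ∀ u : ℂ → ℂ, MemReducedBergman (ball (0 : ℂ) 1) u → ∀ w ∈ ball (0 : ℂ) 1,
      u w = ∫ z in ball (0 : ℂ) 1,
        u z * (starRingEnd ℂ) (1 / ((Real.pi : ℂ) * (1 - z * (starRingEnd ℂ) w) ^ 2)) := by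
  refine ⟨fun w hw => kernel_mem (mem_ball_zero_iff.1 hw), fun u hu w hw => ?_⟩
  obtain ⟨hd, -, hi⟩ := hu
  rw [mem_ball_zero_iff] at hw
  rw [integral_unitDisc_eq (integrableOn_mul_conj_kernel hd hi hw), ← integral_radial hd hw]
  rw [intervalIntegral.integral_of_le zero_le_one, intervalIntegral.integral_of_le zero_le_one,
    integral_Ioc_eq_integral_Ioo, integral_Ioc_eq_integral_Ioo]
  refine setIntegral_congr_fun measurableSet_Ioo (fun r hr => ?_)
  have hpi : (Real.pi : ℂ) ≠ 0 := by exact_mod_cast Real.pi_ne_zero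
  simp only [circleAverage_mul_conj_kernel hd hw hr, Complex.real_smul]
  push_cast
  field_simp
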